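/- Let G be a discrete torsion-free abelian group and let G_j (1 ≤ j ≤ J) be discrete abelian groups, all equipped with counting measure. Let σ_j : G → G_j be surjective group homomorphisms with ⋂_{j=1}^J ker(σ_j) = {0}, and let p_j ∈ [1,∞]. For a finitely generated abelian group A, let γ(A) denote its torsion-free rank, i.e. the dimension of the ℚ-vector space ℚ ⊗_ℤ A. If for every finitely generated subgroup H of G one has γ(H) ≤ Σ_{j=1}^J γ(σ_j(H))/p_j, then the optimal Brascamp–Lieb constant BL(G, σ, p) equals 1; if this rank condition fails for some finitely generated subgroup H of G, then BL(G, σ, p) = ∞, i.e. the Brascamp–Lieb inequality holds for no finite constant. -/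

import Mathlib

open MeasureTheory ENNReal TensorProduct

/-- The discrete Brascamp–Lieb inequality (with counting measures) holds with constant `C`,
for finitely supported real inputs. -/
def HoldsBLCount {ι : Type*} [Fintype ι] {G : Type*} [AddCommGroup G] [MeasurableSpace G]
    {Gj : ι → Type*} [∀ j, AddCommGroup (Gj j)] [∀ j, MeasurableSpace (Gj j)]
    (σ : ∀ j, G →+ Gj j) (p : ι → ℝ≥0∞) (C : ℝ≥0∞) : Prop :=
  ∀ f : ∀ j, Gj j → ℝ, (∀ j, (Function.support (f j)).Finite) →
    Integrable (fun x => ∏ j, f j (σ j x)) (Measure.count : Measure G) →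
    ENNReal.ofReal |∫ x, ∏ j, f j (σ j x) ∂(Measure.count : Measure G)|
      ≤ C * ∏ j, eLpNorm (f j) (p j) (Measure.count : Measure (Gj j))

/-- The optimal discrete Brascamp–Lieb constant (with counting measures). -/
noncomputable def blConstCount {ι : Type*} [Fintype ι] {G : Type*} [AddCommGroup G]
    [MeasurableSpace G]
    {Gj : ι → Type*} [∀ j, AddCommGroup (Gj j)] [∀ j, MeasurableSpace (Gj j)]
    (σ : ∀ j, G →+ Gj j) (p : ι → ℝ≥0∞) : ℝ≥0∞ :=
  sInf {C | HoldsBLCount σ p C}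

namespace BrascampLieb

section Linear

open Module

universe u v w

variable {K : Type*} [Field K] {ι : Type w} [Fintype ι]

/-- The rank condition of a Brascamp–Lieb datum of linear maps, with exponents `1 / s j`. -/
def RankCondition {V : Type*} [AddCommGroup V] [Module K V] {E : ι → Type*}
    [∀ j, AddCommGroup (E j)] [∀ j, Module K (E j)] (L : ∀ j, V →ₗ[K] E j) (s : ι → ℝ) : Prop :=
  ∀ W : Submodule K V, (finrank K W : ℝ) ≤ ∑ j, s j * finrank K (W.map (L j))

/-- The Brascamp–Lieb inequality with constant `1` for sums over a set, written for the powers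
`g j ^ s j` of arbitrary nonnegative functions. -/
def SumBound {V : Type*} {E : ι → Type*} (L : ∀ j, V → E j) (s : ι → ℝ) : Prop :=
  ∀ g : ∀ j, E j → ℝ≥0∞, ∑' x, ∏ j, g j (L j x) ^ s j ≤ ∏ j, (∑' y, g j y) ^ s j

/-- The indices whose exponent lies strictly between `0` and `1`. -/
noncomputable def fractionalIndices (s : ι → ℝ) : Finset ι :=
  Finset.univ.filter fun j => 0 < s j ∧ s j < 1

lemma mem_fractionalIndices {s : ι → ℝ} {j : ι} :
    j ∈ fractionalIndices s ↔ 0 < s j ∧ s j < 1 := by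
  simp [fractionalIndices]

lemma tsum_prod_le_prod_tsum {κ : Type*} [Fintype κ] {V : Type*} {E : κ → Type*}
    (L : ∀ j, V → E j) (hL : Function.Injective fun x j => L j x) (g : ∀ j, E j → ℝ≥0∞) :
    ∑' x, ∏ j, g j (L j x) ≤ ∏ j, ∑' y, g j y := by
  classical
  rw [ENNReal.tsum_eq_iSup_sum]
  refine iSup_le fun T => ?_
  calc ∑ x ∈ T, ∏ j, g j (L j x)
      = ∑ y ∈ T.image (fun x j => L j x), ∏ j, g j (y j) := by
        rw [Finset.sum_image fun _ _ _ _ h => hL h]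
    _ ≤ ∑ y ∈ Fintype.piFinset (fun j => T.image (L j)), ∏ j, g j (y j) := by
        refine Finset.sum_le_sum_of_subset fun y hy => ?_
        obtain ⟨x, hx, rfl⟩ := Finset.mem_image.1 hy
        exact Fintype.mem_piFinset.2 fun j => Finset.mem_image_of_mem _ hx
    _ = ∏ j, ∑ y ∈ T.image (L j), g j y := (Finset.prod_univ_sum _ _).symm
    _ ≤ ∏ j, ∑' y, g j y := Finset.prod_le_prod' fun j _ => ENNReal.sum_le_tsum _

lemma SumBound.of_injective {V : Type*} {E : ι → Type*} {L : ∀ j, V → E j} {s : ι → ℝ}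
    (h0 : ∀ j, 0 ≤ s j) (hL : Function.Injective fun x (j : {j // s j = 1}) => L j x) :
    SumBound L s := by
  classical
  intro g
  have hsplit : ∀ a : ι → ℝ≥0∞, ∏ j, a j ^ s j
      = (∏ j : {j // s j = 1}, a j) * ∏ j : {j // ¬ s j = 1}, a j ^ s j := by
    intro a
    rw [← Fintype.prod_subtype_mul_prod_subtype (fun j => s j = 1)]
    congr 1
    exact Finset.prod_congr rfl fun j _ => by rw [j.2, ENNReal.rpow_one]
  calc ∑' x, ∏ j, g j (L j x) ^ s j
      ≤ ∑' x, (∏ j : {j // s j = 1}, g j (L j x)) *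
          ∏ j : {j // ¬ s j = 1}, (∑' y, g j y) ^ s j := by
        refine ENNReal.tsum_le_tsum fun x => ?_
        rw [hsplit]
        gcongr with j
        · exact h0 j
        · exact ENNReal.le_tsum _
    _ ≤ (∏ j : {j // s j = 1}, ∑' y, g j y) *
          ∏ j : {j // ¬ s j = 1}, (∑' y, g j y) ^ s j := by
        rw [ENNReal.tsum_mul_right]
        gcongr
        exact tsum_prod_le_prod_tsum (fun (j : {j // s j = 1}) => L j) hL fun j => g j
    _ = ∏ j, (∑' y, g j y) ^ s j := (hsplit fun j => ∑' y, g j y).symm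

lemma SumBound.convexComb {V : Type*} {E : ι → Type*} {L : ∀ j, V → E j} {s₀ s₁ : ι → ℝ}
    (h0 : ∀ j, 0 ≤ s₀ j) (h1 : ∀ j, 0 ≤ s₁ j) (H0 : SumBound L s₀) (H1 : SumBound L s₁)
    {a b : ℝ} (ha : 0 ≤ a) (hb : 0 ≤ b) (hab : a + b = 1) :
    SumBound L fun j => a * s₀ j + b * s₁ j := by
  intro g
  have hsplit : ∀ c : ι → ℝ≥0∞, ∏ j, c j ^ (a * s₀ j + b * s₁ j)
      = (∏ j, c j ^ s₀ j) ^ a * (∏ j, c j ^ s₁ j) ^ b := by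
    intro c
    rw [← ENNReal.prod_rpow_of_nonneg ha, ← ENNReal.prod_rpow_of_nonneg hb,
      ← Finset.prod_mul_distrib]
    refine Finset.prod_congr rfl fun j _ => ?_
    rw [ENNReal.rpow_add_of_nonneg _ _ (mul_nonneg ha (h0 j)) (mul_nonneg hb (h1 j)),
      mul_comm a, mul_comm b, ENNReal.rpow_mul, ENNReal.rpow_mul]
  simp only [hsplit]
  let _ : MeasurableSpace V := ⊤
  have hold := ENNReal.lintegral_mul_norm_pow_le (μ := (Measure.count : Measure V))
    (f := fun x => ∏ j, g j (L j x) ^ s₀ j) (g := fun x => ∏ j, g j (L j x) ^ s₁ j)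
    measurable_from_top.aemeasurable measurable_from_top.aemeasurable ha hb hab
  simp only [lintegral_count] at hold
  refine hold.trans ?_
  gcongr
  · exact H0 g
  · exact H1 g

lemma tsum_fiber {α β : Type*} (f : α → β) (g : α → ℝ≥0∞) :
    ∑' b, ∑' a : {a // f a = b}, g a = ∑' a, g a := by
  rw [← ENNReal.tsum_sigma' fun p : (b : β) × {a // f a = b} => g p.2]
  exact (Equiv.sigmaFiberEquiv f).tsum_eq g

section Critical

variable {V : Type u} [AddCommGroup V] [Module K V]
  {E : ι → Type v} [∀ j, AddCommGroup (E j)] [∀ j, Module K (E j)]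

/-- The maps induced on the quotient by a subspace `W`. -/
def quotientMap (L : ∀ j, V →ₗ[K] E j) (W : Submodule K V) (j : ι) :
    V ⧸ W →ₗ[K] E j ⧸ W.map (L j) :=
  W.mapQ (W.map (L j)) (L j) (Submodule.map_le_iff_le_comap.1 le_rfl)

lemma SumBound.of_subspace_of_quotient (L : ∀ j, V →ₗ[K] E j) {s : ι → ℝ}
    (W : Submodule K V)
    (hW : SumBound (fun j => ⇑((L j).comp W.subtype)) s)
    (hQ : SumBound (fun j => ⇑(quotientMap L W j)) s) : SumBound (fun j => ⇑(L j)) s := by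
  intro g
  set G : ∀ j, E j ⧸ W.map (L j) → ℝ≥0∞ := fun j q =>
    ∑' y : {y // (W.map (L j)).mkQ y = q}, g j y
  have hsum : ∀ j, ∑' q, G j q = ∑' y, g j y := fun j => tsum_fiber _ _
  rw [← tsum_fiber W.mkQ]
  simp only [← hsum]
  refine le_trans (ENNReal.tsum_le_tsum fun c => ?_) (hQ G)
  obtain ⟨x, rfl⟩ := W.mkQ_surjective c
  let e : W ≃ {a // W.mkQ a = W.mkQ x} :=
    { toFun := fun w => ⟨x + w, by simp⟩
      invFun := fun a => ⟨a - x, by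
        simpa [Submodule.Quotient.eq] using a.2⟩
      left_inv := fun w => by simp
      right_inv := fun a => Subtype.ext (by simp) }
  rw [← e.tsum_eq]
  let h : ∀ j, E j → ℝ≥0∞ := fun j y =>
    Set.indicator {y | (W.map (L j)).mkQ y = (W.map (L j)).mkQ (L j x)} (g j) (L j x + y)
  have hh : ∀ j, ∑' y, h j y = G j (quotientMap L W j (W.mkQ x)) := fun j =>
    ((Equiv.addLeft (L j x)).tsum_eq (Set.indicator
      {y | (W.map (L j)).mkQ y = (W.map (L j)).mkQ (L j x)} (g j))).trans
      (tsum_subtype {y | (W.map (L j)).mkQ y = (W.map (L j)).mkQ (L j x)} (g j)).symm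
  simp only [← hh]
  refine le_trans (le_of_eq (tsum_congr fun w => ?_)) (hW h)
  refine Finset.prod_congr rfl fun j _ => ?_
  have hmem : L j x + L j w ∈ {y | (W.map (L j)).mkQ y = (W.map (L j)).mkQ (L j x)} := by
    simpa using ⟨(w : V), w.2, rfl⟩
  simp only [h, LinearMap.comp_apply, Submodule.subtype_apply, Set.indicator_of_mem hmem]
  rw [← map_add]
  rfl

lemma finrank_map_mkQ_add_finrank {M : Type*} [AddCommGroup M] [Module K M]
    {A B : Submodule K M} [FiniteDimensional K A] (hBA : B ≤ A) :
    finrank K (A.map B.mkQ) + finrank K B = finrank K A := by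
  rw [← LinearMap.finrank_range_add_finrank_ker (B.mkQ.domRestrict A),
    LinearMap.range_domRestrict]
  congr 1
  rw [LinearMap.ker_domRestrict, Submodule.ker_mkQ]
  exact (Submodule.submoduleOfEquivOfLe hBA).finrank_eq.symm

lemma RankCondition.subspace {L : ∀ j, V →ₗ[K] E j} {s : ι → ℝ} (hR : RankCondition L s)
    (W : Submodule K V) : RankCondition (fun j => (L j).comp W.subtype) s := by
  intro U
  have := hR (U.map W.subtype)
  rw [Submodule.finrank_map_subtype_eq] at this
  exact this.trans (le_of_eq (Finset.sum_congr rfl fun j _ => by rw [Submodule.map_comp]))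

lemma RankCondition.quotient [FiniteDimensional K V] {L : ∀ j, V →ₗ[K] E j} {s : ι → ℝ}
    (hR : RankCondition L s) {W : Submodule K V}
    (hW : (finrank K W : ℝ) = ∑ j, s j * finrank K (W.map (L j))) :
    RankCondition (quotientMap L W) s := by
  intro U
  have hle : W ≤ U.comap W.mkQ := fun w hw => by
    simp [(Submodule.Quotient.mk_eq_zero W).2 hw]
  have hU : (U.comap W.mkQ).map W.mkQ = U :=
    Submodule.map_comap_eq_of_surjective W.mkQ_surjective U
  have h1 := finrank_map_mkQ_add_finrank hle
  have h2 : ∀ j, finrank K (U.map (quotientMap L W j)) + finrank K (W.map (L j))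
      = finrank K ((U.comap W.mkQ).map (L j)) := fun j => by
    have hmap : U.map (quotientMap L W j)
        = ((U.comap W.mkQ).map (L j)).map (W.map (L j)).mkQ := by
      nth_rewrite 1 [← hU]
      rw [← Submodule.map_comp, ← Submodule.map_comp]
      rfl
    rw [← finrank_map_mkQ_add_finrank (Submodule.map_mono (f := L j) hle), hmap]
  rw [hU] at h1
  have h3 := hR (U.comap W.mkQ)
  rw [← h1] at h3
  simp only [← h2] at h3
  push_cast at h3
  simp only [mul_add, Finset.sum_add_distrib] at h3
  linarith

lemma SumBound.of_card_fractionalIndices_le_one [FiniteDimensional K V] {L : ∀ j, V →ₗ[K] E j}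
    {s : ι → ℝ} (h0 : ∀ j, 0 ≤ s j) (h1 : ∀ j, s j ≤ 1) (hR : RankCondition L s)
    (hcard : (fractionalIndices s).card ≤ 1) : SumBound (fun j => ⇑(L j)) s := by
  refine SumBound.of_injective h0 ?_
  let N : Submodule K V := ⨅ j : {j // s j = 1}, LinearMap.ker (L j)
  have hN : N = ⊥ := by
    rw [← Submodule.finrank_eq_zero (R := K)]
    by_contra hne
    have hpos : (0 : ℝ) < finrank K N := by exact_mod_cast Nat.pos_of_ne_zero hne
    have hle : (finrank K N : ℝ) ≤ ∑ j ∈ fractionalIndices s, s j * finrank K N := by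
      refine (hR N).trans ?_
      rw [← Finset.sum_subset (Finset.subset_univ (fractionalIndices s))]
      · gcongr with j
        · exact h0 j
        · exact Submodule.finrank_map_le (L j) N
      · intro j _ hj
        rcases (h0 j).eq_or_lt with h | h
        · rw [← h, zero_mul]
        · have hj1 : s j = 1 := (h1 j).antisymm
            (not_lt.1 fun h' => hj (mem_fractionalIndices.2 ⟨h, h'⟩))
          have : N.map (L j) = ⊥ := by
            rw [← LinearMap.le_ker_iff_map]
            exact iInf_le (fun j : {j // s j = 1} => LinearMap.ker (L j)) ⟨j, hj1⟩
          simp [this]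
    rcases Nat.le_one_iff_eq_zero_or_eq_one.1 hcard with h | h
    · rw [Finset.card_eq_zero.1 h, Finset.sum_empty] at hle
      exact absurd hpos (not_lt.2 hle)
    · obtain ⟨i, hi⟩ := Finset.card_eq_one.1 h
      rw [hi, Finset.sum_singleton] at hle
      have hi1 := (mem_fractionalIndices.1 (hi ▸ Finset.mem_singleton_self i)).2
      nlinarith
  intro x y hxy
  have : x - y ∈ N := by
    simp only [N, Submodule.mem_iInf, LinearMap.mem_ker, map_sub, sub_eq_zero]
    exact fun j => congrFun hxy j
  rw [hN, Submodule.mem_bot] at this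
  exact sub_eq_zero.1 this

end Critical

lemma exists_pos_forall_nonneg_exists_eq_zero {C : Set (ℝ × ℝ)} (hC : C.Finite)
    (hpos : ∀ c ∈ C, 0 < c.1) (hneg : ∃ c ∈ C, c.2 < 0) :
    ∃ t : ℝ, 0 < t ∧ (∀ c ∈ C, 0 ≤ c.1 + t * c.2) ∧ ∃ c ∈ C, c.1 + t * c.2 = 0 := by
  obtain ⟨c₀, hc₀, hmin⟩ := Set.exists_min_image {c ∈ C | c.2 < 0} (fun c => c.1 / (-c.2))
    (hC.subset (Set.sep_subset _ _)) hneg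
  have hne : -c₀.2 ≠ 0 := (neg_pos.2 hc₀.2).ne'
  refine ⟨c₀.1 / (-c₀.2), div_pos (hpos _ hc₀.1) (neg_pos.2 hc₀.2), fun c hc => ?_,
    c₀, hc₀.1, ?_⟩
  · rcases lt_or_ge c.2 0 with h | h
    · have := hmin c ⟨hc, h⟩
      rw [le_div_iff₀ (neg_pos.2 h)] at this
      linarith
    · have := div_pos (hpos _ hc₀.1) (neg_pos.2 hc₀.2)
      have := hpos c hc
      positivity
  · have : c₀.2 ≠ 0 := hc₀.2.ne
    field_simp
    ring

section Move

variable {V : Type u} [AddCommGroup V] [Module K V] [FiniteDimensional K V]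
  {E : ι → Type v} [∀ j, AddCommGroup (E j)] [∀ j, Module K (E j)]

/-- A proper nonzero subspace for which the rank condition is an equality. -/
def IsCritical (L : ∀ j, V →ₗ[K] E j) (s : ι → ℝ) (W : Submodule K V) : Prop :=
  W ≠ ⊥ ∧ W ≠ ⊤ ∧ (finrank K W : ℝ) = ∑ j, s j * finrank K (W.map (L j))

lemma finite_range_ranks (L : ∀ j, V →ₗ[K] E j) :
    (Set.range fun W : Submodule K V =>
      (finrank K W, fun j => finrank K (W.map (L j)))).Finite := by
  classical
  refine (Set.finite_Iic ((finrank K V, fun _ => finrank K V) : ℕ × (ι → ℕ))).subset ?_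
  rintro _ ⟨W, rfl⟩
  exact ⟨W.finrank_le, fun j => (Submodule.finrank_map_le (L j) W).trans W.finrank_le⟩

lemma exists_boundary_point {L : ∀ j, V →ₗ[K] E j} {s v : ι → ℝ} (h0 : ∀ j, 0 ≤ s j)
    (h1 : ∀ j, s j ≤ 1) (hR : RankCondition L s) (hcrit : ∀ W, ¬ IsCritical L s W)
    (hv : ∀ j, v j ≠ 0 → j ∈ fractionalIndices s) (hv0 : ∃ i, v i ≠ 0)
    (htop : ∑ j, v j * finrank K ((⊤ : Submodule K V).map (L j)) = 0) :
    ∃ t : ℝ, 0 < t ∧ (∀ j, 0 ≤ s j + t * v j) ∧ (∀ j, s j + t * v j ≤ 1) ∧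
      RankCondition L (fun j => s j + t * v j) ∧
      ((∃ W, IsCritical L (fun j => s j + t * v j) W) ∨
        (fractionalIndices fun j => s j + t * v j).card < (fractionalIndices s).card) := by
  let slack : ℕ × (ι → ℕ) → ℝ × ℝ := fun d =>
    (∑ j, s j * d.2 j - d.1, ∑ j, v j * d.2 j)
  let ranks : Submodule K V → ℕ × (ι → ℕ) := fun W =>
    (finrank K W, fun j => finrank K (W.map (L j)))
  let C : Set (ℝ × ℝ) := (fun j => (s j, v j)) '' (fractionalIndices s : Set ι) ∪
    (fun j => (1 - s j, -v j)) '' (fractionalIndices s : Set ι) ∪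
    slack '' (ranks '' {W | W ≠ ⊥ ∧ W ≠ ⊤})
  have hC : C.Finite := by
    refine ((Finset.finite_toSet _).image _).union ((Finset.finite_toSet _).image _) |>.union ?_
    exact ((finite_range_ranks L).subset (Set.image_subset_range _ _)).image _
  have hpos : ∀ c ∈ C, 0 < c.1 := by
    rintro _ ((⟨j, hj, rfl⟩ | ⟨j, hj, rfl⟩) | ⟨_, ⟨W, hW, rfl⟩, rfl⟩)
    · exact (mem_fractionalIndices.1 hj).1
    · exact sub_pos.2 (mem_fractionalIndices.1 hj).2
    · exact sub_pos.2 ((hR W).lt_of_ne fun h => hcrit W ⟨hW.1, hW.2, h⟩)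
  have hneg : ∃ c ∈ C, c.2 < 0 := by
    obtain ⟨i, hi⟩ := hv0
    rcases hi.lt_or_gt with h | h
    · exact ⟨_, Or.inl (Or.inl ⟨i, hv i hi, rfl⟩), h⟩
    · exact ⟨_, Or.inl (Or.inr ⟨i, hv i hi, rfl⟩), neg_lt_zero.2 h⟩
  obtain ⟨t, ht, hnn, c, hc, hc0⟩ := exists_pos_forall_nonneg_exists_eq_zero hC hpos hneg
  have hlin : ∀ W : Submodule K V, ∑ j, (s j + t * v j) * finrank K (W.map (L j))
      = ∑ j, s j * finrank K (W.map (L j)) + t * ∑ j, v j * finrank K (W.map (L j)) := by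
    intro W
    rw [Finset.mul_sum, ← Finset.sum_add_distrib]
    exact Finset.sum_congr rfl fun j _ => by ring
  have hoff : ∀ j, j ∉ fractionalIndices s → v j = 0 := fun j hj => by
    by_contra h
    exact hj (hv j h)
  have hlo : ∀ j, 0 ≤ s j + t * v j := by
    intro j
    by_cases hj : j ∈ fractionalIndices s
    · exact hnn _ (Or.inl (Or.inl ⟨j, hj, rfl⟩))
    · simpa [hoff j hj] using h0 j
  have hhi : ∀ j, s j + t * v j ≤ 1 := by
    intro j
    by_cases hj : j ∈ fractionalIndices s
    · have := hnn _ (Or.inl (Or.inr ⟨j, hj, rfl⟩))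
      simp only at this
      linarith
    · simpa [hoff j hj] using h1 j
  have hdrop : ∀ j ∈ fractionalIndices s, j ∉ fractionalIndices (fun j => s j + t * v j) →
      (fractionalIndices fun j => s j + t * v j).card < (fractionalIndices s).card := by
    intro j hj hj'
    refine Finset.card_lt_card ((Finset.ssubset_iff_of_subset fun k hk => ?_).2 ⟨j, hj, hj'⟩)
    by_contra hks
    refine hks (mem_fractionalIndices.2 ?_)
    simpa [hoff k hks] using mem_fractionalIndices.1 hk
  refine ⟨t, ht, hlo, hhi, fun W => ?_, ?_⟩
  · by_cases hbot : W = ⊥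
    · subst hbot
      rw [finrank_bot, Nat.cast_zero]
      exact Finset.sum_nonneg fun j _ => mul_nonneg (hlo j) (Nat.cast_nonneg _)
    by_cases htp : W = ⊤
    · subst htp
      rw [hlin, htop, mul_zero, add_zero]
      exact hR ⊤
    have := hnn _ (Or.inr ⟨_, ⟨W, ⟨hbot, htp⟩, rfl⟩, rfl⟩)
    simp only [slack, ranks] at this
    rw [hlin]
    linarith
  · rcases hc with (⟨j, hj, rfl⟩ | ⟨j, hj, rfl⟩) | ⟨_, ⟨W, hW, rfl⟩, rfl⟩
    · refine Or.inr (hdrop j hj fun h => ?_)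
      exact (mem_fractionalIndices.1 h).1.ne' hc0
    · refine Or.inr (hdrop j hj fun h => ?_)
      have := (mem_fractionalIndices.1 h).2
      simp only at hc0
      linarith
    · refine Or.inl ⟨W, hW.1, hW.2, ?_⟩
      simp only [slack, ranks] at hc0
      rw [hlin]
      linarith

end Move

theorem sumBound_of_rankCondition_of_finrank_eq (n : ℕ) :
    ∀ (V : Type u) [AddCommGroup V] [Module K V] [FiniteDimensional K V]
      (E : ι → Type v) [∀ j, AddCommGroup (E j)] [∀ j, Module K (E j)]
      (L : ∀ j, V →ₗ[K] E j), finrank K V = n → ∀ s : ι → ℝ, (∀ j, 0 ≤ s j) → (∀ j, s j ≤ 1) →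
      RankCondition L s → SumBound (fun j => ⇑(L j)) s := by
  classical
  induction n using Nat.strong_induction_on with
  | _ n ihn =>
  intro V _ _ _ E _ _ L hn s
  have hcritical : ∀ s : ι → ℝ, (∀ j, 0 ≤ s j) → (∀ j, s j ≤ 1) → RankCondition L s →
      (∃ W, IsCritical L s W) → SumBound (fun j => ⇑(L j)) s := by
    rintro s h0 h1 hR ⟨W, hbot, htop, hW⟩
    refine SumBound.of_subspace_of_quotient L W ?_ ?_
    · exact ihn _ (hn ▸ Submodule.finrank_lt htop) W E _ rfl s h0 h1 (hR.subspace W)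
    · refine ihn _ ?_ (V ⧸ W) _ _ rfl s h0 h1 (hR.quotient hW)
      have := W.finrank_quotient_add_finrank
      have : finrank K W ≠ 0 := fun h => hbot (Submodule.finrank_eq_zero.1 h)
      omega
  induction hm : (fractionalIndices s).card using Nat.strong_induction_on generalizing s with
  | _ m ihm =>
  intro h0 h1 hR
  by_cases hex : ∃ W, IsCritical L s W
  · exact hcritical s h0 h1 hR hex
  rcases le_or_gt (fractionalIndices s).card 1 with hcard | hcard
  · exact SumBound.of_card_fractionalIndices_le_one h0 h1 hR hcard
  obtain ⟨i, hi, k, hk, hik⟩ := Finset.one_lt_card.1 hcard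
  let d : ι → ℝ := fun j => finrank K ((⊤ : Submodule K V).map (L j))
  obtain ⟨a, b, hab, habd⟩ : ∃ a b : ℝ, (a ≠ 0 ∨ b ≠ 0) ∧ a * d i + b * d k = 0 := by
    by_cases h : d k = 0
    · exact ⟨0, 1, Or.inr one_ne_zero, by simp [h]⟩
    · exact ⟨d k, -d i, Or.inl h, by ring⟩
  let v : ι → ℝ := Pi.single i a + Pi.single k b
  have hvi : v i = a := by simp [v, hik]
  have hvk : v k = b := by simp [v, hik.symm]
  have hv : ∀ j, v j ≠ 0 → j ∈ fractionalIndices s := by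
    intro j hj
    by_cases h : j = i
    · exact h ▸ hi
    by_cases h' : j = k
    · exact h' ▸ hk
    · exact absurd (by simp [v, h, h']) hj
  have hv0 : ∃ j, v j ≠ 0 := hab.elim (fun h => ⟨i, hvi ▸ h⟩) fun h => ⟨k, hvk ▸ h⟩
  have htop : ∑ j, v j * d j = 0 := by
    simp only [v, Pi.add_apply, add_mul, Finset.sum_add_distrib, Pi.single_apply, ite_mul,
      zero_mul, Finset.sum_ite_eq', Finset.mem_univ, if_true]
    exact habd
  have hmove : ∀ v : ι → ℝ, (∀ j, v j ≠ 0 → j ∈ fractionalIndices s) → (∃ j, v j ≠ 0) →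
      ∑ j, v j * d j = 0 → ∃ t : ℝ, 0 < t ∧ (∀ j, 0 ≤ s j + t * v j) ∧
        SumBound (fun j => ⇑(L j)) fun j => s j + t * v j := by
    intro v hv hv0 htop
    obtain ⟨t, ht, hlo, hhi, hR', h | h⟩ :=
      exists_boundary_point h0 h1 hR (not_exists.1 hex) hv hv0 htop
    · exact ⟨t, ht, hlo, hcritical _ hlo hhi hR' h⟩
    · exact ⟨t, ht, hlo, ihm _ (hm ▸ h) _ rfl hlo hhi hR'⟩
  obtain ⟨t, ht, hlo, hB⟩ := hmove v hv hv0 htop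
  obtain ⟨t', ht', hlo', hB'⟩ := hmove (fun j => -v j) (fun j hj => hv j (neg_ne_zero.1 hj))
    (hv0.imp fun j hj => neg_ne_zero.2 hj) (by simp [htop])
  have hsum : t + t' ≠ 0 := (add_pos ht ht').ne'
  have := SumBound.convexComb hlo hlo' hB hB' (a := t' / (t + t')) (b := t / (t + t'))
    (by positivity) (by positivity) (by field_simp; ring)
  convert this using 2 with j
  field_simp
  ring

/-- Under the rank condition, the Brascamp–Lieb inequality for counting measures on vector spaces
holds with constant `1`. -/
theorem sumBound_of_rankCondition {V : Type u} [AddCommGroup V] [Module K V]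
    [FiniteDimensional K V] {E : ι → Type v} [∀ j, AddCommGroup (E j)] [∀ j, Module K (E j)]
    {L : ∀ j, V →ₗ[K] E j} {s : ι → ℝ} (h0 : ∀ j, 0 ≤ s j) (h1 : ∀ j, s j ≤ 1)
    (hR : RankCondition L s) : SumBound (fun j => ⇑(L j)) s :=
  sumBound_of_rankCondition_of_finrank_eq _ V E L rfl s h0 h1 hR

end Linear

section RationalSpan

open Module

variable {G G' : Type*} [AddCommGroup G] [AddCommGroup G']

/-- The rational subspace of `ℚ ⊗ G` spanned by a subgroup of `G`. -/
noncomputable def ratSpan (A : AddSubgroup G) : Submodule ℚ (ℚ ⊗[ℤ] G) :=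
  Submodule.span ℚ ((fun a : G => (1 : ℚ) ⊗ₜ[ℤ] a) '' A)

/-- The `ℚ`-linear extension of a homomorphism of abelian groups. -/
noncomputable def ratMap (σ : G →+ G') : ℚ ⊗[ℤ] G →ₗ[ℚ] ℚ ⊗[ℤ] G' :=
  σ.toIntLinearMap.baseChange ℚ

lemma range_ratMap (σ : G →+ G') : LinearMap.range (ratMap σ) = ratSpan σ.range := by
  refine le_antisymm ?_ (Submodule.span_le.2 ?_)
  · rintro _ ⟨x, rfl⟩
    induction x with
    | zero => simp
    | add x y hx hy =>
      rw [map_add]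
      exact add_mem hx hy
    | tmul q a =>
      have : ratMap σ (q ⊗ₜ a) = q • ((1 : ℚ) ⊗ₜ[ℤ] σ a) := by
        rw [TensorProduct.smul_tmul', smul_eq_mul, mul_one]
        rfl
      rw [this]
      exact Submodule.smul_mem _ _ (Submodule.subset_span ⟨_, ⟨a, rfl⟩, rfl⟩)
  · rintro _ ⟨_, ⟨a, rfl⟩, rfl⟩
    exact ⟨1 ⊗ₜ a, rfl⟩

lemma finrank_ratSpan (A : AddSubgroup G) : finrank ℚ (ratSpan A) = finrank ℚ (ℚ ⊗[ℤ] A) := by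
  have hinj : Function.Injective (ratMap A.subtype) :=
    Module.Flat.lTensor_preserves_injective_linearMap (M := ℚ) A.subtype.toIntLinearMap
      A.subtype_injective
  have h := range_ratMap A.subtype
  rw [A.range_subtype] at h
  rw [← h, LinearMap.finrank_range_of_inj hinj]

lemma ratSpan_map (σ : G →+ G') (A : AddSubgroup G) :
    ratSpan (A.map σ) = (ratSpan A).map (ratMap σ) := by
  rw [ratSpan, ratSpan, Submodule.map_span, AddSubgroup.coe_map, Set.image_image, Set.image_image]
  rfl

lemma ratSpan_zmultiples (g : G) :
    ratSpan (AddSubgroup.zmultiples g) = Submodule.span ℚ {(1 : ℚ) ⊗ₜ[ℤ] g} := by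
  refine le_antisymm (Submodule.span_le.2 ?_) (Submodule.span_mono ?_)
  · rintro _ ⟨_, ⟨n, rfl⟩, rfl⟩
    simp only [TensorProduct.tmul_smul]
    exact zsmul_mem (Submodule.mem_span_singleton_self _) n
  · rintro _ rfl
    exact ⟨g, AddSubgroup.mem_zmultiples g, rfl⟩

lemma ratSpan_sup (A B : AddSubgroup G) : ratSpan (A ⊔ B) = ratSpan A ⊔ ratSpan B := by
  refine le_antisymm (Submodule.span_le.2 ?_) (sup_le ?_ ?_)
  · rintro _ ⟨x, hx, rfl⟩
    obtain ⟨a, ha, b, hb, rfl⟩ := AddSubgroup.mem_sup.1 hx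
    simp only [TensorProduct.tmul_add]
    exact add_mem
      (Submodule.mem_sup_left (Submodule.subset_span ⟨a, ha, rfl⟩))
      (Submodule.mem_sup_right (Submodule.subset_span ⟨b, hb, rfl⟩))
  · exact Submodule.span_mono (Set.image_mono (SetLike.coe_subset_coe.2 le_sup_left))
  · exact Submodule.span_mono (Set.image_mono (SetLike.coe_subset_coe.2 le_sup_right))

lemma exists_fg_ratSpan_eq (W : Submodule ℚ (ℚ ⊗[ℤ] G)) (hW : W.FG) :
    ∃ H : AddSubgroup G, H.FG ∧ ratSpan H = W := by
  induction W, hW using Submodule.fg_induction with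
  | singleton w =>
    obtain ⟨⟨g, n⟩, hg⟩ := IsLocalizedModule.surj (nonZeroDivisors ℤ) (TensorProduct.mk ℤ ℚ G 1) w
    refine ⟨AddSubgroup.zmultiples g, ⟨{g}, by simp [AddSubgroup.zmultiples_eq_closure]⟩, ?_⟩
    have hn : (n : ℤ) ≠ 0 := nonZeroDivisors.ne_zero n.2
    have hw : (1 : ℚ) ⊗ₜ[ℤ] g = ((n : ℤ) : ℚ) • w := by
      rw [Int.cast_smul_eq_zsmul]
      exact hg.symm
    rw [ratSpan_zmultiples, hw]
    exact Submodule.span_singleton_smul_eq (Int.cast_ne_zero.2 hn).isUnit w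
  | sup W₁ W₂ _ _ h₁ h₂ =>
    obtain ⟨A, hA, rfl⟩ := h₁
    obtain ⟨B, hB, rfl⟩ := h₂
    exact ⟨A ⊔ B, AddSubgroup.FG.sup hA hB, ratSpan_sup A B⟩

lemma one_tmul_injective (hTF : ∀ x : G, x ≠ 0 → ¬ IsOfFinAddOrder x) :
    Function.Injective fun x : G => (1 : ℚ) ⊗ₜ[ℤ] x := by
  intro x y hxy
  obtain ⟨c, hc⟩ := (IsLocalizedModule.eq_iff_exists (nonZeroDivisors ℤ)
    (TensorProduct.mk ℤ ℚ G 1)).1 hxy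
  by_contra hne
  refine hTF (x - y) (sub_ne_zero.2 hne) ?_
  refine isOfFinAddOrder_iff_zsmul_eq_zero.2 ⟨c, nonZeroDivisors.ne_zero c.2, ?_⟩
  rw [smul_sub, sub_eq_zero]
  exact hc

end RationalSpan

section UpperBound

open Module

variable {ι : Type*} [Fintype ι]

lemma natCast_le_sum_div_iff {p : ι → ℝ≥0∞} (hp : ∀ j, 1 ≤ p j) (d : ℕ) (e : ι → ℕ) :
    (d : ℝ≥0∞) ≤ ∑ j, (e j : ℝ≥0∞) / p j ↔ (d : ℝ) ≤ ∑ j, (p j)⁻¹.toReal * e j := by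
  have hfin : ∀ j, (e j : ℝ≥0∞) / p j ≠ ∞ := fun j =>
    ENNReal.div_ne_top (ENNReal.natCast_ne_top _) (zero_lt_one.trans_le (hp j)).ne'
  rw [← ENNReal.toReal_le_toReal (ENNReal.natCast_ne_top _)
    (ENNReal.sum_ne_top.2 fun j _ => hfin j), ENNReal.toReal_sum fun j _ => hfin j]
  simp [div_eq_mul_inv, mul_comm]

lemma exists_enorm_le_mul_rpow {E F : Type*} [MeasurableSpace E] [MeasurableSingletonClass E]
    (φ : E → F) {p : ℝ≥0∞} (hp : 1 ≤ p) (f : E → ℝ) :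
    ∃ (c : ℝ≥0∞) (g : F → ℝ≥0∞), (∀ y, ‖f y‖ₑ ≤ c * g (φ y) ^ p⁻¹.toReal) ∧
      c * (∑' z, g z) ^ p⁻¹.toReal = eLpNorm f p Measure.count := by
  by_cases hp' : p = ∞
  · subst hp'
    refine ⟨eLpNorm f ∞ Measure.count, 0, fun y => ?_, by simp⟩
    have := Measure.ae_count_iff.1 (ENNReal.ae_le_essSup (μ := Measure.count) fun y => ‖f y‖ₑ) y
    simpa [eLpNorm_exponent_top, eLpNormEssSup] using this
  · have hp0 : p ≠ 0 := (zero_lt_one.trans_le hp).ne'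
    have hpr : p.toReal ≠ 0 := (ENNReal.toReal_pos hp0 hp').ne'
    refine ⟨1, fun z => ∑' y : {y // φ y = z}, ‖f y‖ₑ ^ p.toReal, fun y => ?_, ?_⟩
    · rw [one_mul]
      calc ‖f y‖ₑ = (‖f y‖ₑ ^ p.toReal) ^ p⁻¹.toReal := by
            rw [← ENNReal.rpow_mul, ENNReal.toReal_inv, mul_inv_cancel₀ hpr, ENNReal.rpow_one]
        _ ≤ _ := by
            gcongr
            exact ENNReal.le_tsum (f := fun y' : {y' // φ y' = φ y} => ‖f y'‖ₑ ^ p.toReal) ⟨y, rfl⟩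
    · rw [tsum_fiber φ fun y => ‖f y‖ₑ ^ p.toReal, one_mul,
        eLpNorm_eq_lintegral_rpow_enorm_toReal hp0 hp', lintegral_count, ENNReal.toReal_inv,
        one_div]

variable {G : Type*} [AddCommGroup G] {Gj : ι → Type*} [∀ j, AddCommGroup (Gj j)]

lemma rankCondition_of_subgroups {σ : ∀ j, G →+ Gj j} {p : ι → ℝ≥0∞} (hp : ∀ j, 1 ≤ p j)
    (hrank : ∀ H : AddSubgroup G, H.FG →
      (finrank ℚ (ℚ ⊗[ℤ] ↥H) : ℝ≥0∞)
        ≤ ∑ j, (finrank ℚ (ℚ ⊗[ℤ] ↥(H.map (σ j))) : ℝ≥0∞) / p j)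
    (V : Submodule ℚ (ℚ ⊗[ℤ] G)) [FiniteDimensional ℚ V] :
    RankCondition (fun j => (ratMap (σ j)).comp V.subtype) fun j => (p j)⁻¹.toReal := by
  intro W
  obtain ⟨H, hH, hHW⟩ := exists_fg_ratSpan_eq (W.map V.subtype)
    ((IsNoetherian.noetherian W).map V.subtype)
  have h := (natCast_le_sum_div_iff hp _ _).1 (hrank H hH)
  simp only [← finrank_ratSpan] at h
  rw [hHW, Submodule.finrank_map_subtype_eq] at h
  exact h.trans (le_of_eq (Finset.sum_congr rfl fun j _ => by
    rw [Submodule.map_comp, ratSpan_map, hHW]))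

theorem holdsBLCount_one [MeasurableSpace G] [MeasurableSingletonClass G]
    [∀ j, MeasurableSpace (Gj j)] [∀ j, MeasurableSingletonClass (Gj j)]
    (hTF : ∀ x : G, x ≠ 0 → ¬ IsOfFinAddOrder x) {σ : ∀ j, G →+ Gj j} {p : ι → ℝ≥0∞}
    (hp : ∀ j, 1 ≤ p j)
    (hrank : ∀ H : AddSubgroup G, H.FG →
      (finrank ℚ (ℚ ⊗[ℤ] ↥H) : ℝ≥0∞)
        ≤ ∑ j, (finrank ℚ (ℚ ⊗[ℤ] ↥(H.map (σ j))) : ℝ≥0∞) / p j) :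
    HoldsBLCount σ p 1 := by
  classical
  intro f _ _
  rw [one_mul, ← Real.enorm_eq_ofReal_abs]
  refine (enorm_integral_le_lintegral_enorm _).trans ?_
  rw [lintegral_count, ENNReal.tsum_eq_iSup_sum]
  refine iSup_le fun T => ?_
  choose c g hfg hsum using fun j =>
    exists_enorm_le_mul_rpow (fun y : Gj j => (1 : ℚ) ⊗ₜ[ℤ] y) (hp j) (f j)
  let V : Submodule ℚ (ℚ ⊗[ℤ] G) :=
    Submodule.span ℚ (T.image fun x => (1 : ℚ) ⊗ₜ[ℤ] x : Finset (ℚ ⊗[ℤ] G))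
  have : FiniteDimensional ℚ V := FiniteDimensional.span_finset ℚ _
  have hB := sumBound_of_rankCondition (fun j => ENNReal.toReal_nonneg)
    (fun j => ENNReal.toReal_le_of_le_ofReal zero_le_one (by simpa using hp j))
    (rankCondition_of_subgroups hp hrank V) g
  let φ : T → V := fun x => ⟨1 ⊗ₜ (x : G),
    Submodule.subset_span (Finset.mem_coe.2 (Finset.mem_image_of_mem _ x.2))⟩
  have hφ : Function.Injective φ := fun x y hxy =>
    Subtype.ext (one_tmul_injective hTF (congrArg Subtype.val hxy))
  calc ∑ x ∈ T, ‖∏ j, f j (σ j x)‖ₑ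
      = ∑' x : T, ∏ j, ‖f j (σ j x)‖ₑ := by
        rw [tsum_fintype, ← Finset.sum_coe_sort]
        exact Finset.sum_congr rfl fun x _ => by
          simp [enorm_eq_nnnorm, nnnorm_prod]
    _ ≤ ∑' x : T, (∏ j, c j) *
          ∏ j, g j (((ratMap (σ j)).comp V.subtype) (φ x)) ^ (p j)⁻¹.toReal := by
        refine ENNReal.tsum_le_tsum fun x => ?_
        rw [← Finset.prod_mul_distrib]
        exact Finset.prod_le_prod' fun j _ => hfg j (σ j x)
    _ ≤ (∏ j, c j) * ∏ j, (∑' z, g j z) ^ (p j)⁻¹.toReal := by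
        rw [ENNReal.tsum_mul_left]
        gcongr
        exact (ENNReal.tsum_comp_le_tsum_of_injective hφ _).trans hB
    _ = ∏ j, eLpNorm (f j) (p j) Measure.count := by
        rw [← Finset.prod_mul_distrib]
        exact Finset.prod_congr rfl fun j _ => hsum j

end UpperBound

section LowerBound

open Module

lemma exists_card_image_le {A : Type*} [AddCommGroup A] [AddGroup.FG A] [DecidableEq A] {d : ℕ}
    (a : Fin d → A) : ∃ B : ℕ, ∀ N : ℕ, 1 ≤ N →
      ((Finset.univ : Finset (Fin d → Fin N)).image fun n => ∑ i, (n i : ℕ) • a i).card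
        ≤ B * N ^ finrank ℚ (ℚ ⊗[ℤ] A) := by
  classical
  obtain ⟨r, κ, _, q, hq, e, ⟨ψ⟩⟩ := AddCommGroup.equiv_free_prod_directSum_zmod A
  have : ∀ i, NeZero (q i ^ e i) := fun i => ⟨pow_ne_zero _ (hq i).ne_zero⟩
  have : Finite (DirectSum κ fun i => ZMod (q i ^ e i)) :=
    Finite.of_equiv _ DFinsupp.equivFunOnFintype.symm
  let _ := Fintype.ofFinite (DirectSum κ fun i => ZMod (q i ^ e i))
  have hr : r ≤ finrank ℚ (ℚ ⊗[ℤ] A) := by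
    have hfin : Module.Finite ℤ A := Module.Finite.iff_addGroup_fg.2 inferInstance
    let π : A →+ (Fin r →₀ ℤ) := (AddMonoidHom.fst _ _).comp ψ.toAddMonoidHom
    have hπ : Function.Surjective π := Prod.fst_surjective.comp ψ.surjective
    have := LinearMap.finrank_le_finrank_of_surjective (f := ratMap π)
      (LinearMap.lTensor_surjective ℚ (g := π.toIntLinearMap) hπ)
    rwa [Module.finrank_baseChange, Module.finrank_finsupp_self, Fintype.card_fin] at this
  let M : ℕ := ∑ i, ∑ k, ((ψ (a i)).1 k).natAbs
  refine ⟨(2 * M + 1) ^ r * Fintype.card (DirectSum κ fun i => ZMod (q i ^ e i)), fun N hN => ?_⟩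
  have hM : ∀ i k, ((ψ (a i)).1 k).natAbs ≤ ∑ k, ((ψ (a i)).1 k).natAbs := fun i k =>
    Finset.single_le_sum (f := fun k => ((ψ (a i)).1 k).natAbs) (fun _ _ => Nat.zero_le _)
      (Finset.mem_univ k)
  have hbox : ∀ (n : Fin d → Fin N) (k : Fin r),
      |(ψ (∑ i, (n i : ℕ) • a i)).1 k| ≤ (M * N : ℕ) := by
    intro n k
    have hexp : (ψ (∑ i, (n i : ℕ) • a i)).1 k = ∑ i, (n i : ℤ) * (ψ (a i)).1 k := by
      simp [map_sum, Prod.fst_sum, Finsupp.finsetSum_apply]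
    rw [hexp]
    refine (Finset.abs_sum_le_sum_abs _ _).trans ?_
    simp only [M, Finset.sum_mul, Nat.cast_sum]
    refine Finset.sum_le_sum fun i _ => ?_
    rw [abs_mul, Int.abs_eq_natAbs ((ψ (a i)).1 k), abs_of_nonneg (by positivity), mul_comm]
    rw [← Nat.cast_sum, ← Finset.sum_mul]
    exact_mod_cast Nat.mul_le_mul (hM i k) (n i).2.le
  let box : Finset ((Fin r → ℤ) × DirectSum κ fun i => ZMod (q i ^ e i)) :=
    (Fintype.piFinset fun _ => Finset.Icc (-((M * N : ℕ) : ℤ)) (M * N : ℕ)) ×ˢ Finset.univ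
  have hcard : box.card
      = (2 * (M * N) + 1) ^ r * Fintype.card (DirectSum κ fun i => ZMod (q i ^ e i)) := by
    simp only [box, Finset.card_product, Fintype.card_piFinset_const, Int.card_Icc,
      Finset.card_univ]
    congr 2
    omega
  calc _ ≤ box.card := by
        refine Finset.card_le_card_of_injOn (fun x => (⇑(ψ x).1, (ψ x).2)) ?_ ?_
        · intro x hx
          obtain ⟨n, -, rfl⟩ := Finset.mem_image.1 (Finset.mem_coe.1 hx)
          refine Finset.mem_coe.2 (Finset.mem_product.2
            ⟨Fintype.mem_piFinset.2 fun k => ?_, Finset.mem_univ _⟩)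
          exact Finset.mem_Icc.2 (abs_le.1 (hbox n k))
        · intro x _ y _ hxy
          simp only [Prod.mk.injEq] at hxy
          exact ψ.injective (Prod.ext (DFunLike.coe_injective hxy.1) hxy.2)
    _ = (2 * (M * N) + 1) ^ r * Fintype.card (DirectSum κ fun i => ZMod (q i ^ e i)) := hcard
    _ ≤ ((2 * M + 1) * N) ^ r * Fintype.card (DirectSum κ fun i => ZMod (q i ^ e i)) := by
        gcongr
        nlinarith
    _ ≤ _ := by
        rw [mul_pow, mul_right_comm]
        gcongr

variable {ι : Type*} [Fintype ι] {G : Type*} [AddCommGroup G] [MeasurableSpace G]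
  [MeasurableSingletonClass G] {Gj : ι → Type*} [∀ j, AddCommGroup (Gj j)]
  [∀ j, MeasurableSpace (Gj j)] [∀ j, MeasurableSingletonClass (Gj j)]

lemma card_le_of_holdsBLCount [∀ j, DecidableEq (Gj j)] {σ : ∀ j, G →+ Gj j}
    (hker : (⨅ j, (σ j).ker : AddSubgroup G) = ⊥) {p : ι → ℝ≥0∞} (hp : ∀ j, 1 ≤ p j)
    {C : ℝ≥0∞} (hC : HoldsBLCount σ p C) {T : Finset G} (hT : T.Nonempty) :
    (T.card : ℝ≥0∞) ≤ C * ∏ j, ((T.image (σ j)).card : ℝ≥0∞) ^ (p j)⁻¹.toReal := by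
  classical
  let f : ∀ j, Gj j → ℝ := fun j => (T.image (σ j) : Set (Gj j)).indicator fun _ => 1
  let S : Set G := {x | ∀ j, σ j x ∈ T.image (σ j)}
  have hinj : Function.Injective fun x j => σ j x := by
    intro x y hxy
    have : x - y ∈ (⨅ j, (σ j).ker : AddSubgroup G) := by
      simp only [AddSubgroup.mem_iInf, AddMonoidHom.mem_ker, map_sub, sub_eq_zero]
      exact fun j => congrFun hxy j
    rw [hker, AddSubgroup.mem_bot] at this
    exact sub_eq_zero.1 this
  have hS : S.Finite := by
    refine Set.Finite.subset ((Fintype.piFinset fun j => T.image (σ j)).finite_toSet.preimage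
      hinj.injOn) fun x hx => ?_
    exact Finset.mem_coe.2 (Fintype.mem_piFinset.2 hx)
  have hTS : (T : Set G) ⊆ S := fun x hx j => Finset.mem_image_of_mem _ hx
  have hprod : (fun x => ∏ j, f j (σ j x)) = S.indicator fun _ => (1 : ℝ) := by
    funext x
    by_cases hx : x ∈ S
    · rw [Set.indicator_of_mem hx]
      exact Finset.prod_eq_one fun j _ => Set.indicator_of_mem (Finset.mem_coe.2 (hx j)) _
    · rw [Set.indicator_of_notMem hx]
      obtain ⟨j, hj⟩ := not_forall.1 hx
      exact Finset.prod_eq_zero (Finset.mem_univ j) (Set.indicator_of_notMem hj _)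
  have hcount : (Measure.count : Measure G) S ≠ ∞ := (Measure.count_apply_lt_top.2 hS).ne
  have hnorm : ∀ j, eLpNorm (f j) (p j) Measure.count
      = ((T.image (σ j)).card : ℝ≥0∞) ^ (p j)⁻¹.toReal := fun j => by
    have hne : (T.image (σ j) : Set (Gj j)).Nonempty := Finset.coe_nonempty.2 (hT.image _)
    rw [eLpNorm_indicator_const' (Finset.measurableSet _) (Measure.count_ne_zero hne)
      (zero_lt_one.trans_le (hp j)).ne', Measure.count_apply_finset, ENNReal.toReal_inv, one_div]
    simp
  have h := hC f (fun j => (T.image (σ j)).finite_toSet.subset Set.support_indicator_subset) (by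
    rw [hprod]
    exact (integrable_indicator_iff hS.measurableSet).2 (integrableOn_const hcount))
  rw [hprod, integral_indicator_const _ hS.measurableSet] at h
  simp only [hnorm] at h
  refine le_trans ?_ h
  rw [smul_eq_mul, mul_one, abs_of_nonneg measureReal_nonneg, ofReal_measureReal hcount,
    ← Measure.count_apply_finset]
  exact measure_mono hTS

lemma one_le_of_holdsBLCount {σ : ∀ j, G →+ Gj j}
    (hker : (⨅ j, (σ j).ker : AddSubgroup G) = ⊥) {p : ι → ℝ≥0∞} (hp : ∀ j, 1 ≤ p j)
    {C : ℝ≥0∞} (hC : HoldsBLCount σ p C) : 1 ≤ C := by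
  classical
  simpa using card_le_of_holdsBLCount hker hp hC (Finset.singleton_nonempty 0)

theorem eq_top_of_holdsBLCount (hTF : ∀ x : G, x ≠ 0 → ¬ IsOfFinAddOrder x)
    {σ : ∀ j, G →+ Gj j} (hker : (⨅ j, (σ j).ker : AddSubgroup G) = ⊥) {p : ι → ℝ≥0∞}
    (hp : ∀ j, 1 ≤ p j) {H : AddSubgroup G} (hH : H.FG)
    (hrank : ¬ (finrank ℚ (ℚ ⊗[ℤ] ↥H) : ℝ≥0∞)
      ≤ ∑ j, (finrank ℚ (ℚ ⊗[ℤ] ↥(H.map (σ j))) : ℝ≥0∞) / p j)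
    {C : ℝ≥0∞} (hC : HoldsBLCount σ p C) : C = ∞ := by
  classical
  by_contra hCtop
  rw [natCast_le_sum_div_iff hp, not_le] at hrank
  have hfg : AddGroup.FG H := (AddGroup.fg_iff_addSubgroup_fg H).2 hH
  have : Module.Finite ℤ H := Module.Finite.iff_addGroup_fg.2 hfg
  have : IsAddTorsionFree G := isAddTorsionFree_iff_not_isOfFinAddOrder.2 fun x hx => hTF x hx
  let d := finrank ℤ H
  have hd : finrank ℚ (ℚ ⊗[ℤ] ↥H) = d := Module.finrank_baseChange
  rw [hd] at hrank
  let b : Basis (Fin d) ℤ H := Module.finBasis ℤ H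
  have : ∀ j, AddGroup.FG (H.map (σ j)) := fun j =>
    AddGroup.fg_of_surjective ((σ j).addSubgroupMap_surjective H)
  choose B hB using fun j => exists_card_image_le fun i : Fin d =>
    (⟨σ j (b i), AddSubgroup.mem_map_of_mem _ (b i).2⟩ : H.map (σ j))
  set s : ι → ℝ := fun j => (p j)⁻¹.toReal
  set e : ι → ℕ := fun j => finrank ℚ (ℚ ⊗[ℤ] ↥(H.map (σ j)))
  have hgrowth : ∀ N : ℕ, 1 ≤ N →
      (N : ℝ) ^ d ≤ C.toReal * (∏ j, (B j : ℝ) ^ s j) * (N : ℝ) ^ ∑ j, s j * e j := by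
    intro N hN
    let point : (Fin d → Fin N) → G := fun n => ((∑ i, (n i : ℕ) • b i : H) : G)
    have hpoint : Function.Injective point := by
      intro n n' h
      have hcoord : ∀ m : Fin d → Fin N, b.equivFun (∑ i, (m i : ℕ) • b i)
          = fun i => ((m i : ℕ) : ℤ) := fun m => by
        simp_rw [← natCast_zsmul]
        exact b.equivFun_symm_apply (fun i => ((m i : ℕ) : ℤ)) ▸ b.equivFun.apply_symm_apply _
      have heq := congrArg b.equivFun (Subtype.ext h)
      rw [hcoord, hcoord] at heq
      exact funext fun i => Fin.ext (by exact_mod_cast congrFun heq i)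
    let T : Finset G := Finset.univ.image point
    have hTcard : T.card = N ^ d := by
      simp [T, Finset.card_image_of_injective _ hpoint]
    have hTne : T.Nonempty := Finset.card_pos.1 (hTcard ▸ by positivity)
    have hTimage : ∀ j, (T.image (σ j)).card ≤ B j * N ^ e j := by
      intro j
      refine le_trans ?_ (hB j N hN)
      rw [← Finset.card_image_of_injective _ (Subtype.val_injective (p := (· ∈ H.map (σ j)))),
        Finset.image_image, Finset.image_image]
      refine Finset.card_le_card (Finset.image_subset_iff.2 fun n _ => ?_)
      refine Finset.mem_image.2 ⟨n, Finset.mem_univ _, ?_⟩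
      simp [point]
    have hle := card_le_of_holdsBLCount hker hp hC hTne
    have hle' : ((N ^ d : ℕ) : ℝ≥0∞) ≤ C * ∏ j, ((B j * N ^ e j : ℕ) : ℝ≥0∞) ^ s j := by
      rw [← hTcard]
      refine hle.trans ?_
      gcongr with j
      exact hTimage j
    have hfin : C * ∏ j, ((B j * N ^ e j : ℕ) : ℝ≥0∞) ^ s j ≠ ∞ :=
      ENNReal.mul_ne_top hCtop (ENNReal.prod_ne_top fun j _ =>
        ENNReal.rpow_ne_top_of_nonneg ENNReal.toReal_nonneg (ENNReal.natCast_ne_top _))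
    have hreal := ENNReal.toReal_mono hfin hle'
    have hN0 : (0 : ℝ) < N := by exact_mod_cast hN
    rw [ENNReal.toReal_mul, ENNReal.toReal_prod, ENNReal.toReal_natCast, Nat.cast_pow] at hreal
    refine hreal.trans (le_of_eq ?_)
    rw [mul_assoc, Real.rpow_sum_of_pos hN0, ← Finset.prod_mul_distrib]
    congr 1
    refine Finset.prod_congr rfl fun j _ => ?_
    rw [← ENNReal.toReal_rpow, ENNReal.toReal_natCast]
    push_cast
    rw [Real.mul_rpow (by positivity) (by positivity), ← Real.rpow_natCast, ← Real.rpow_mul hN0.le,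
      mul_comm (s j)]
  have hlim := (tendsto_rpow_atTop (sub_pos.2 hrank)).comp tendsto_natCast_atTop_atTop
  obtain ⟨N, hN, hN1⟩ := ((hlim.eventually_gt_atTop (C.toReal * ∏ j, (B j : ℝ) ^ s j)).and
    (Filter.eventually_ge_atTop 1)).exists
  have hN0 : (0 : ℝ) < N := by exact_mod_cast hN1
  have h := hgrowth N hN1
  rw [Function.comp_apply, Real.rpow_sub hN0, Real.rpow_natCast, lt_div_iff₀ (by positivity)] at hN
  exact absurd h (not_le.2 hN)

end LowerBound

end BrascampLieb

/-- Let `G` be a discrete torsion-free abelian group, `σⱼ : G → Gⱼ` surjective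
homomorphisms onto discrete abelian groups with trivial common kernel, all groups carrying
counting measure and `pⱼ ∈ [1,∞]`. Write `γ(A) = dim_ℚ (ℚ ⊗_ℤ A)` for the torsion-free rank.
If `γ(H) ≤ Σⱼ γ(σⱼ(H))/pⱼ` for every finitely generated subgroup `H ≤ G`, then the optimal
Brascamp–Lieb constant is `1`; if this rank condition fails for some finitely generated
subgroup, the optimal constant is `∞`. -/
theorem blConst_discrete_torsionFree
    {ι : Type*} [Fintype ι]
    {G : Type*} [AddCommGroup G] [MeasurableSpace G] [MeasurableSingletonClass G]
    {Gj : ι → Type*} [∀ j, AddCommGroup (Gj j)] [∀ j, MeasurableSpace (Gj j)]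
    [∀ j, MeasurableSingletonClass (Gj j)]
    (hTF : ∀ x : G, x ≠ 0 → ¬ IsOfFinAddOrder x)
    (σ : ∀ j, G →+ Gj j) (hsurj : ∀ j, Function.Surjective (σ j))
    (hker : (⨅ j, (σ j).ker : AddSubgroup G) = ⊥)
    (p : ι → ℝ≥0∞) (hp : ∀ j, 1 ≤ p j) :
    ((∀ H : AddSubgroup G, H.FG →
        (Module.finrank ℚ (ℚ ⊗[ℤ] ↥H) : ℝ≥0∞)
          ≤ ∑ j, (Module.finrank ℚ (ℚ ⊗[ℤ] ↥(H.map (σ j))) : ℝ≥0∞) / p j) →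
      blConstCount σ p = 1) ∧
    ((∃ H : AddSubgroup G, H.FG ∧
        ¬ (Module.finrank ℚ (ℚ ⊗[ℤ] ↥H) : ℝ≥0∞)
          ≤ ∑ j, (Module.finrank ℚ (ℚ ⊗[ℤ] ↥(H.map (σ j))) : ℝ≥0∞) / p j) →
      blConstCount σ p = ∞) := by
  constructor
  · intro hrank
    exact le_antisymm (sInf_le (BrascampLieb.holdsBLCount_one hTF hp hrank))
      (le_sInf fun C hC => BrascampLieb.one_le_of_holdsBLCount hker hp hC)
  · rintro ⟨H, hH, hrank⟩
    exact sInf_eq_top.2 fun C hC => BrascampLieb.eq_top_of_holdsBLCount hTF hker hp hH hrank hC
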